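/- Let (X, f_{1,∞}) be an NDS. If f_{1,∞} is thickly transitive, then f_{1,∞} is totally transitive. -/

import Mathlib

open Set Filter

section NDSDefs

variable {X : Type*}

/-- `nComp f i n` is the composition `f (i+n-1) ∘ ⋯ ∘ f (i+1) ∘ f i`.
Here `f` is the 0-indexed sequence of maps of the NDS (so `f 0` is the paper's `f₁`),
and `nComp f 0 n` is the paper's `f₁ⁿ`. -/
def nComp (f : ℕ → X → X) (i : ℕ) : ℕ → X → X
  | 0 => id
  | n + 1 => f (i + n) ∘ nComp f i n

/-- The `k`-th iterate NDS `f^{[k]}`: its `n`-th map (0-indexed) is `f_{kn+1}^{k}`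
in the paper's notation, i.e. the composition of `k` maps of `f` starting at index `k*n`. -/
def iterNDS (f : ℕ → X → X) (k : ℕ) : ℕ → X → X :=
  fun n => nComp f (k * n) k

/-- The product NDS `f^{[a]} = f^{[a 0]} × ⋯ × f^{[a (r-1)]}` on `Fin r → X`
for a vector `a : Fin r → ℕ`. -/
def vecIter (f : ℕ → X → X) {r : ℕ} (a : Fin r → ℕ) : ℕ → (Fin r → X) → Fin r → X :=
  fun n x i => iterNDS f (a i) n (x i)

section Topo

variable [TopologicalSpace X]

/-- Topological transitivity of an NDS. -/
def NDSTransitive (f : ℕ → X → X) : Prop :=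
  ∀ U V : Set X, IsOpen U → U.Nonempty → IsOpen V → V.Nonempty →
    ∃ n : ℕ, 1 ≤ n ∧ (nComp f 0 n '' U ∩ V).Nonempty

/-- Multi-transitivity of an NDS. -/
def MultiTransitive (f : ℕ → X → X) : Prop :=
  ∀ m : ℕ, 1 ≤ m → ∀ U V : Fin m → Set X,
    (∀ i, IsOpen (U i)) → (∀ i, (U i).Nonempty) →
    (∀ i, IsOpen (V i)) → (∀ i, (V i).Nonempty) →
    ∃ l : ℕ, 1 ≤ l ∧ ∀ i : Fin m, (nComp f 0 ((i.1 + 1) * l) '' U i ∩ V i).Nonempty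

/-- Multi-transitivity of an NDS with respect to a vector `a`. -/
def MultiTransWrt (f : ℕ → X → X) {p : ℕ} (a : Fin p → ℕ) : Prop :=
  ∀ U V : Fin p → Set X,
    (∀ i, IsOpen (U i)) → (∀ i, (U i).Nonempty) →
    (∀ i, IsOpen (V i)) → (∀ i, (V i).Nonempty) →
    ∃ l : ℕ, 1 ≤ l ∧ ∀ i : Fin p, (nComp f 0 (a i * l) '' U i ∩ V i).Nonempty

/-- Strong multi-transitivity of an NDS: multi-transitivity with respect to every
vector of positive integers. -/
def StronglyMultiTransitive (f : ℕ → X → X) : Prop :=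
  ∀ p : ℕ, 1 ≤ p → ∀ a : Fin p → ℕ, (∀ i, 1 ≤ a i) → MultiTransWrt f a

/-- Weak mixing of order `n` of an NDS. -/
def WeaklyMixingOfOrder (f : ℕ → X → X) (n : ℕ) : Prop :=
  ∀ U V : Fin n → Set X,
    (∀ i, IsOpen (U i)) → (∀ i, (U i).Nonempty) →
    (∀ i, IsOpen (V i)) → (∀ i, (V i).Nonempty) →
    ∃ m : ℕ, 1 ≤ m ∧ ∀ i : Fin n, (nComp f 0 m '' U i ∩ V i).Nonempty

/-- Weak mixing of all orders of an NDS. -/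
def WeaklyMixingAllOrders (f : ℕ → X → X) : Prop :=
  ∀ n : ℕ, 2 ≤ n → WeaklyMixingOfOrder f n

/-- Mild mixing of an NDS: the product with any transitive NDS (on a compact
metric space, with continuous maps) is transitive. -/
def MildlyMixing (f : ℕ → X → X) : Prop :=
  ∀ (Y : Type) [MetricSpace Y] [CompactSpace Y] (g : ℕ → Y → Y),
    (∀ n, Continuous (g n)) → NDSTransitive g →
      NDSTransitive (fun n (p : X × Y) => (f n p.1, g n p.2))

/-- Δ-transitivity of an NDS. -/
def DeltaTransitive (f : ℕ → X → X) : Prop :=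
  ∀ m : ℕ, 1 ≤ m → ∃ Y : Set X, Dense Y ∧ IsGδ Y ∧
    ∀ x ∈ Y, Dense {y : Fin m → X | ∃ n : ℕ, 1 ≤ n ∧ y = fun i => nComp f 0 ((i.1 + 1) * n) x}

/-- Δ-mixing of an NDS. -/
def DeltaMixing (f : ℕ → X → X) : Prop :=
  ∀ m : ℕ, 1 ≤ m → ∀ A : Set ℕ, A.Infinite → 0 ∉ A →
    ∃ Y : Set X, Dense Y ∧ IsGδ Y ∧
      ∀ x ∈ Y, Dense {y : Fin m → X | ∃ n ∈ A, y = fun i => nComp f 0 ((i.1 + 1) * n) x}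

/-- The set `N_{f_{1,∞}}(U,V)` of (positive) hitting times. -/
def hitTimes (f : ℕ → X → X) (U V : Set X) : Set ℕ :=
  {n : ℕ | 1 ≤ n ∧ (nComp f 0 n '' U ∩ V).Nonempty}

/-- A set of positive integers is syndetic if it has bounded gaps. -/
def Syndetic (A : Set ℕ) : Prop :=
  ∃ M : ℕ, ∀ i : ℕ, 1 ≤ i → ∃ j ∈ A, i ≤ j ∧ j ≤ i + M

/-- A set of positive integers is thick if it contains arbitrarily long runs. -/
def ThickSet (A : Set ℕ) : Prop :=
  ∀ p : ℕ, ∃ n : ℕ, 1 ≤ n ∧ ∀ j ≤ p, n + j ∈ A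

/-- A set of positive integers is thickly syndetic. -/
def ThicklySyndetic (A : Set ℕ) : Prop :=
  ∀ l : ℕ, Syndetic {m : ℕ | ∀ j ≤ l, m + j ∈ A}

/-- Thick transitivity of an NDS. -/
def ThicklyTransitive (f : ℕ → X → X) : Prop :=
  ∀ U V : Set X, IsOpen U → U.Nonempty → IsOpen V → V.Nonempty →
    ThickSet (hitTimes f U V)

/-- Thickly syndetic transitivity of an NDS. -/
def ThicklySyndeticallyTransitive (f : ℕ → X → X) : Prop :=
  ∀ U V : Set X, IsOpen U → U.Nonempty → IsOpen V → V.Nonempty →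
    ThicklySyndetic (hitTimes f U V)

/-- Total transitivity of an NDS: every iterate `f^{[n]}` is transitive. -/
def TotallyTransitive (f : ℕ → X → X) : Prop :=
  ∀ n : ℕ, 1 ≤ n → NDSTransitive (iterNDS f n)

/-- An NDS is feeble open if each map sends nonempty open sets to sets with
nonempty interior. -/
def FeebleOpen (f : ℕ → X → X) : Prop :=
  ∀ i : ℕ, ∀ U : Set X, IsOpen U → U.Nonempty → (interior (f i '' U)).Nonempty

/-- Strong multi-transitivity of an autonomous system `(X, g)`. -/
def ADSStronglyMultiTransitive (g : X → X) : Prop :=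
  ∀ m : ℕ, 1 ≤ m → ∀ a : Fin m → ℕ, (∀ j, 1 ≤ a j) →
    ∀ U V : Fin m → Set X,
      (∀ j, IsOpen (U j)) → (∀ j, (U j).Nonempty) →
      (∀ j, IsOpen (V j)) → (∀ j, (V j).Nonempty) →
      ∃ l : ℕ, 1 ≤ l ∧ ∀ j : Fin m, (g^[a j * l] '' U j ∩ V j).Nonempty

/-- Δ-transitivity of an autonomous system `(X, g)`. -/
def ADSDeltaTransitive (g : X → X) : Prop :=
  ∀ m : ℕ, 1 ≤ m → ∃ Y : Set X, Dense Y ∧ IsGδ Y ∧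
    ∀ x ∈ Y, Dense {y : Fin m → X | ∃ n : ℕ, 1 ≤ n ∧ y = fun i => g^[(i.1 + 1) * n] x}

/-- Thickly syndetic transitivity of an autonomous system `(X, g)`. -/
def ADSThicklySyndeticallyTransitive (g : X → X) : Prop :=
  ∀ U V : Set X, IsOpen U → U.Nonempty → IsOpen V → V.Nonempty →
    ThicklySyndetic {n : ℕ | 1 ≤ n ∧ (g^[n] '' U ∩ V).Nonempty}

end Topo

section MetricDefs

variable [MetricSpace X]

/-- The compositions `f_r^k` converge collectively to the iterates `g^k`. -/
def CollectiveConvergence (f : ℕ → X → X) (g : X → X) : Prop :=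
  ∀ ε : ℝ, 0 < ε → ∃ r₀ : ℕ, ∀ r ≥ r₀, ∀ k : ℕ, 1 ≤ k → ∀ x : X,
    dist (nComp f r k x) (g^[k] x) < ε

/-- Chain mixing of an NDS. -/
def NDSChainMixing (f : ℕ → X → X) : Prop :=
  ∀ x y : X, ∀ δ : ℝ, 0 < δ → ∃ N : ℕ, 1 ≤ N ∧ ∀ n ≥ N,
    ∃ c : ℕ → X, c 0 = x ∧ c n = y ∧ ∀ i < n, dist (f i (c i)) (c (i + 1)) < δ

/-- Chain transitivity of an NDS. -/
def NDSChainTransitive (f : ℕ → X → X) : Prop :=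
  ∀ x y : X, ∀ δ : ℝ, 0 < δ → ∃ n : ℕ, 1 ≤ n ∧
    ∃ c : ℕ → X, c 0 = x ∧ c n = y ∧ ∀ i < n, dist (f i (c i)) (c (i + 1)) < δ

/-- The shadowing property of an NDS. -/
def NDSShadowing (f : ℕ → X → X) : Prop :=
  ∀ ε : ℝ, 0 < ε → ∃ δ : ℝ, 0 < δ ∧ ∀ n : ℕ, ∀ c : ℕ → X,
    (∀ i < n, dist (f i (c i)) (c (i + 1)) < δ) →
      ∃ z : X, ∀ i ≤ n, dist (nComp f 0 i z) (c i) < ε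

end MetricDefs

end NDSDefs
theorem nComp_add_aux {X : Type*} (f : ℕ → X → X) (i m n : ℕ) :
    nComp f i (m + n) = nComp f (i + m) n ∘ nComp f i m := by
  induction n with
  | zero => rfl
  | succ n ih =>
    show f (i + (m + n)) ∘ nComp f i (m + n) = (f (i + m + n) ∘ nComp f (i + m) n) ∘ nComp f i m
    rw [ih, Nat.add_assoc]
    rfl

theorem nComp_iterNDS_aux {X : Type*} (f : ℕ → X → X) (k m : ℕ) :
    nComp (iterNDS f k) 0 m = nComp f 0 (k * m) := by
  induction m with
  | zero => rfl
  | succ m ih =>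
    show nComp f (k * (0 + m)) k ∘ nComp (iterNDS f k) 0 m = _
    rw [ih, Nat.mul_succ, nComp_add_aux, Nat.zero_add, Nat.zero_add]

/-- a thickly transitive NDS is totally transitive. -/
theorem thicklyTransitive_totallyTransitive {X : Type*} [MetricSpace X] [CompactSpace X]
    (f : ℕ → X → X) (hf : ∀ n, Continuous (f n))
    (h : ThicklyTransitive f) : TotallyTransitive f := by
  intro k hk U V hU hU' hV hV'
  obtain ⟨n, hn, hrun⟩ := h U V hU hU' hV hV' k
  have h1 : n % k < k := Nat.mod_lt _ hk
  have h2 : k * (n / k) + n % k = n := Nat.div_add_mod n k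
  have h3 : k * (n / k + 1) = n + (k - n % k) := by
    rw [Nat.mul_add, Nat.mul_one]; omega
  refine ⟨n / k + 1, Nat.le_add_left 1 _, ?_⟩
  rw [nComp_iterNDS_aux, h3]
  exact (hrun (k - n % k) (by omega)).2
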